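/- Let q be real with 0 < q < 1, let N ≥ 1 be an integer, and let z > 0 be real. Then [N]_q^{[1−Nz]_q} · Γ̃_{q^N}(1/N) ⋯ Γ̃_{q^N}((N−1)/N) · Γ̃_q(Nz) = Γ̃_{q^N}(z) · Γ̃_{q^N}(z + 1/N) ⋯ Γ̃_{q^N}(z + (N−1)/N); equivalently, [1−Nz]_q · log [N]_q + ∑_{k=1}^{N−1} F_{q^N}(k/N) + F_q(Nz) = ∑_{k=0}^{N−1} F_{q^N}(z + k/N). -/

import Mathlib

/-- The logarithm `F_q(z) = log Γ̃_q(z)` of the `q`-gamma function associated with the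
`q`-Hurwitz zeta function, given by its explicit closed form: for real `z > 0`,
`F_q(z) = ∑_{n=2}^∞ (1/n)(q^{z(n−1)} − q^{n−1})/(1 − q^{n−1}) − z + 1
  + ((q^{−z}(1 − (1−q)z) − 1)/(1−q)²) q log q + ((1 − q^{1−z})/(1−q)) log(1−q)`
(real powers of `q` via `rpow`). -/
noncomputable def Fq (q z : ℝ) : ℝ :=
  (∑' n : ℕ, (1 / ((n : ℝ) + 2)) *
      (q ^ (z * ((n : ℝ) + 1)) - q ^ ((n : ℝ) + 1)) / (1 - q ^ ((n : ℝ) + 1)))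
    - z + 1
    + ((q ^ (-z) * (1 - (1 - q) * z) - 1) / (1 - q) ^ 2) * q * Real.log q
    + ((1 - q ^ (1 - z)) / (1 - q)) * Real.log (1 - q)

/-- The `q`-gamma function `Γ̃_q(z) = exp F_q(z)` associated with the `q`-Hurwitz zeta
function. -/
noncomputable def GammaQ (q z : ℝ) : ℝ := Real.exp (Fq q z)

/-!
Everything reduces to the geometric series `∑_{j ≥ 0} q ^ ((z + j) s) = q ^ (z s) / (1 - q ^ s)`.
Since `N (z + k / N + j) = N z + (k + N j)`, splitting `ℕ` into residue classes modulo `N` shows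
that the values of this function at `(q ^ N, z + k / N)`, `0 ≤ k < N`, add up to its value at
`(q, N z)`. The relation holds for every `s ≠ 0` and may be differentiated in `s`.

Up to an additive constant, which is fixed by `F_q(1) = 0`, the function `F_q(z)` is `-z` plus a
combination of the values of the geometric series at `s = 1, 2, 3, …`, its value at `s = -1` and
its `s`-derivative at `s = -1`. Apart from additive constants, the only deviation from an exact
multiplication formula comes from the coefficient `log (1 - q)` of the value at `s = -1`: since
`1 - q ^ N = [N]_q (1 - q)`, it changes by `log [N]_q`, which produces the factor
`[N]_q ^ [1 - Nz]_q`.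
-/

open Finset

lemma sum_range_add_div {K : Type*} [Field K] [CharZero K] {N : ℕ} (hN : N ≠ 0) (z : K) :
    ∑ k ∈ range N, (z + k / N) = N * z + (N - 1) / 2 := by
  have hgauss : ∑ k ∈ range N, (k : K) = N * (N - 1) / 2 := by
    rw [← Nat.cast_sum, sum_range_id, ← Nat.choose_two_right, Nat.cast_choose_two]
  rw [sum_add_distrib, sum_const, card_range, nsmul_eq_mul, ← sum_div, hgauss]
  field_simp

lemma sum_Icc_div_eq_sum_range {K M : Type*} [Field K] [CharZero K] [AddCommMonoid M]
    {f : K → M} (hf : f 1 = 0) (N : ℕ) :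
    ∑ k ∈ Icc 1 (N - 1), f (k / N) = ∑ k ∈ range N, f (1 / N + k / N) := by
  rcases N with _ | n
  · simp
  · have hlast : (1 / (n + 1 : ℕ) + n / (n + 1 : ℕ) : K) = 1 := by
      push_cast
      field_simp
      ring
    rw [sum_range_succ, hlast, hf, add_zero, Nat.add_sub_cancel, range_eq_Ico,
      ← Ico_add_one_right_eq_Icc, ← sum_Ico_add' (fun k : ℕ ↦ f (k / (n + 1 : ℕ))) 0 n 1]
    refine sum_congr rfl fun k _ ↦ ?_
    rw [← add_div, Nat.cast_succ k, add_comm (k : K)]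

/-- The geometric series `∑_{j ≥ 0} q ^ ((z + j) s)` over the shifted lattice `z + ℕ`, as a function
of the exponent `s`. The closed form continues it to exponents such as `s = -1`, where the
series diverges; at `q ^ s = 1` it takes the junk value `0`. -/
noncomputable def hurwitzGeom (q z s : ℝ) : ℝ := q ^ (z * s) / (1 - q ^ s)

/-- The logarithm `F_q(z)` of the `q`-gamma function before normalization at `z = 1`, with its
terms expressed through `hurwitzGeom`. -/
noncomputable def rawFq (q z : ℝ) : ℝ :=
  (∑' n : ℕ, hurwitzGeom q z (n + 1) / (n + 2)) - z + deriv (hurwitzGeom q z) (-1)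
    + hurwitzGeom q z (-1) * Real.log (1 - q)

section HurwitzGeom

variable {q z s : ℝ} {N : ℕ}

lemma pow_rpow_ne_one (hq : 0 < q) (hN : N ≠ 0) (hs : q ^ s ≠ 1) : (q ^ N) ^ s ≠ 1 := by
  rwa [← Real.rpow_pow_comm hq.le, Ne, pow_eq_one_iff_of_nonneg (Real.rpow_nonneg hq.le s) hN]

lemma pow_rpow_add_div_mul (hq : 0 < q) (hN : N ≠ 0) (k : ℕ) :
    (q ^ N) ^ ((z + k / N) * s) = q ^ (N * z * s) * (q ^ s) ^ k := by
  rw [← Real.rpow_natCast q N, ← Real.rpow_mul hq.le, ← Real.rpow_mul_natCast hq.le,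
    ← Real.rpow_add hq]
  congr 1
  field_simp

theorem sum_hurwitzGeom_pow (hq : 0 < q) (hN : N ≠ 0) (hs : q ^ s ≠ 1) :
    ∑ k ∈ range N, hurwitzGeom (q ^ N) (z + k / N) s = hurwitzGeom q (N * z) s := by
  have hNs : (q ^ s) ^ N ≠ 1 := by
    rw [Real.rpow_pow_comm hq.le]
    exact pow_rpow_ne_one hq hN hs
  simp only [hurwitzGeom, pow_rpow_add_div_mul hq hN, ← Real.rpow_pow_comm hq.le]
  rw [← sum_div, ← mul_sum, geom_sum_eq hs]
  have := sub_ne_zero.2 hs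
  have := sub_ne_zero.2 hs.symm
  have := sub_ne_zero.2 hNs.symm
  field_simp
  ring

theorem hasDerivAt_hurwitzGeom (hq : 0 < q) (hs : q ^ s ≠ 1) :
    HasDerivAt (hurwitzGeom q z)
      (q ^ (z * s) * (z * (1 - q ^ s) + q ^ s) / (1 - q ^ s) ^ 2 * Real.log q) s := by
  have hnum : HasDerivAt (fun s ↦ q ^ (z * s)) (Real.log q * z * q ^ (z * s)) s := by
    simpa using ((hasDerivAt_id s).const_mul z).const_rpow hq
  have hden : HasDerivAt (fun s ↦ 1 - q ^ s) (-(q ^ s * Real.log q)) s :=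
    (Real.hasStrictDerivAt_const_rpow hq s).hasDerivAt.const_sub 1
  exact (hnum.div hden (sub_ne_zero.2 hs.symm)).congr_deriv (by ring)

theorem sum_deriv_hurwitzGeom_pow (hq : 0 < q) (hN : N ≠ 0) (hs : q ^ s ≠ 1) :
    ∑ k ∈ range N, deriv (hurwitzGeom (q ^ N) (z + k / N)) s
      = deriv (hurwitzGeom q (N * z)) s := by
  have hdiff (k : ℕ) : DifferentiableAt ℝ (hurwitzGeom (q ^ N) (z + k / N)) s :=
    (hasDerivAt_hurwitzGeom (pow_pos hq N) (pow_rpow_ne_one hq hN hs)).differentiableAt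
  have hnear : ∀ᶠ t in nhds s, q ^ t ≠ 1 :=
    (Real.continuousAt_const_rpow hq.ne').eventually_ne hs
  rw [← deriv_fun_sum fun k _ ↦ hdiff k]
  exact Filter.EventuallyEq.deriv_eq (hnear.mono fun t ht ↦ sum_hurwitzGeom_pow hq hN ht)

lemma rpow_neg_one_ne_one (hq1 : q ≠ 1) : q ^ (-1 : ℝ) ≠ 1 := by
  rwa [Real.rpow_neg_one, inv_ne_one]

lemma one_sub_rpow_neg_one (hq : q ≠ 0) : 1 - q ^ (-1 : ℝ) = -(1 - q) / q := by
  rw [Real.rpow_neg_one]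
  field_simp
  ring

lemma hurwitzGeom_neg_one (hq : 0 < q) : hurwitzGeom q z (-1) = -q ^ (1 - z) / (1 - q) := by
  rw [hurwitzGeom, one_sub_rpow_neg_one hq.ne', mul_neg_one, sub_eq_add_neg 1 z,
    Real.rpow_add hq, Real.rpow_one, div_div_eq_mul_div, div_neg, neg_div, mul_comm]

lemma deriv_hurwitzGeom_neg_one (hq : 0 < q) (hq1 : q ≠ 1) :
    deriv (hurwitzGeom q z) (-1)
      = q ^ (-z) * (1 - (1 - q) * z) / (1 - q) ^ 2 * q * Real.log q := by
  have := sub_ne_zero.2 hq1.symm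
  rw [(hasDerivAt_hurwitzGeom hq (rpow_neg_one_ne_one hq1)).deriv, one_sub_rpow_neg_one hq.ne',
    Real.rpow_neg_one, mul_neg_one]
  field_simp
  ring

end HurwitzGeom

section LogGamma

variable {q z : ℝ} {N : ℕ}

lemma summable_hurwitzGeom_div (hq : 0 < q) (hq1 : q < 1) (hz : 0 < z) :
    Summable fun n : ℕ ↦ hurwitzGeom q z (n + 1) / (n + 2) := by
  have hgeom : Summable fun n : ℕ ↦ (q ^ z) ^ (n + 1) / (1 - q) :=
    ((summable_nat_add_iff 1).2 <| summable_geometric_of_lt_one (by positivity)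
      (Real.rpow_lt_one hq.le hq1 hz)).div_const _
  have hbound (n : ℕ) : hurwitzGeom q z (n + 1) ≤ (q ^ z) ^ (n + 1) / (1 - q) := by
    have hpow : q ^ (n + 1) ≤ q := pow_le_of_le_one hq.le hq1.le n.succ_ne_zero
    rw [hurwitzGeom, ← Nat.cast_succ, Real.rpow_mul_natCast hq.le, Real.rpow_natCast]
    have := sub_pos.2 hq1
    gcongr
  have hnonneg (n : ℕ) : 0 ≤ hurwitzGeom q z (n + 1) :=
    div_nonneg (by positivity) (sub_nonneg.2 (Real.rpow_le_one hq.le hq1.le (by positivity)))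
  refine hgeom.of_nonneg_of_le (fun n ↦ div_nonneg (hnonneg n) (by positivity)) fun n ↦ ?_
  exact (div_le_self (hnonneg n) (by linarith [n.cast_nonneg (α := ℝ)])).trans (hbound n)

theorem Fq_eq_rawFq_sub_rawFq_one (hq : 0 < q) (hq1 : q < 1) (hz : 0 < z) :
    Fq q z = rawFq q z - rawFq q 1 := by
  have hseries : ∑' n : ℕ, (1 / ((n : ℝ) + 2)) *
        (q ^ (z * ((n : ℝ) + 1)) - q ^ ((n : ℝ) + 1)) / (1 - q ^ ((n : ℝ) + 1))
      = (∑' n : ℕ, hurwitzGeom q z (n + 1) / (n + 2))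
        - ∑' n : ℕ, hurwitzGeom q 1 (n + 1) / (n + 2) := by
    rw [← (summable_hurwitzGeom_div hq hq1 hz).tsum_sub
      (summable_hurwitzGeom_div hq hq1 one_pos)]
    refine tsum_congr fun n ↦ ?_
    rw [hurwitzGeom, hurwitzGeom, one_mul]
    ring
  rw [Fq, hseries, rawFq, rawFq, deriv_hurwitzGeom_neg_one hq hq1.ne,
    deriv_hurwitzGeom_neg_one hq hq1.ne, hurwitzGeom_neg_one hq, hurwitzGeom_neg_one hq,
    Real.rpow_neg_one, sub_self, Real.rpow_zero]
  field_simp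
  ring

lemma Fq_one (hq : q ≠ 0) : Fq q 1 = 0 := by
  simp [Fq, Real.rpow_neg_one, hq]

lemma sum_tsum_hurwitzGeom_pow (hq : 0 < q) (hq1 : q < 1) (hN : N ≠ 0) (hz : 0 < z) :
    ∑ k ∈ range N, ∑' n : ℕ, hurwitzGeom (q ^ N) (z + k / N) (n + 1) / (n + 2)
      = ∑' n : ℕ, hurwitzGeom q (N * z) (n + 1) / (n + 2) := by
  rw [← Summable.tsum_finsetSum fun k _ ↦ summable_hurwitzGeom_div (pow_pos hq N)
    (pow_lt_one₀ hq.le hq1 hN) (by positivity)]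
  refine tsum_congr fun n ↦ ?_
  rw [← sum_div, sum_hurwitzGeom_pow hq hN (Real.rpow_lt_one hq.le hq1 (by positivity)).ne]

theorem sum_rawFq_pow (hq : 0 < q) (hq1 : q < 1) (hN : N ≠ 0) (hz : 0 < z) :
    ∑ k ∈ range N, rawFq (q ^ N) (z + k / N)
      = rawFq q (N * z) - (N - 1) / 2
        + hurwitzGeom q (N * z) (-1) * Real.log ((1 - q ^ N) / (1 - q)) := by
  have hs := rpow_neg_one_ne_one hq1.ne
  have hlog := Real.log_div (sub_pos.2 (pow_lt_one₀ hq.le hq1 hN)).ne' (sub_pos.2 hq1).ne'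
  simp only [rawFq, sum_add_distrib, sum_sub_distrib, ← sum_mul]
  rw [sum_tsum_hurwitzGeom_pow hq hq1 hN hz, ← sum_add_distrib, sum_range_add_div hN,
    sum_deriv_hurwitzGeom_pow hq hN hs, sum_hurwitzGeom_pow hq hN hs, hlog]
  ring

theorem sum_Fq_pow (hq : 0 < q) (hq1 : q < 1) (hN : N ≠ 0) (hz : 0 < z) :
    (1 - q ^ (1 - N * z)) / (1 - q) * Real.log ((1 - q ^ N) / (1 - q))
        + ∑ k ∈ Icc 1 (N - 1), Fq (q ^ N) (k / N) + Fq q (N * z)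
      = ∑ k ∈ range N, Fq (q ^ N) (z + k / N) := by
  have hQ := pow_pos hq N
  have hQ1 := pow_lt_one₀ hq.le hq1 hN
  have hsum {w : ℝ} (hw : 0 < w) : ∑ k ∈ range N, Fq (q ^ N) (w + k / N)
      = rawFq q (N * w) - (N - 1) / 2
        + hurwitzGeom q (N * w) (-1) * Real.log ((1 - q ^ N) / (1 - q)) - N * rawFq (q ^ N) 1 := by
    have hterm (k : ℕ) : Fq (q ^ N) (w + k / N) = rawFq (q ^ N) (w + k / N) - rawFq (q ^ N) 1 :=
      Fq_eq_rawFq_sub_rawFq_one hQ hQ1 (by positivity)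
    simp only [hterm]
    rw [sum_sub_distrib, sum_rawFq_pow hq hq1 hN hw, sum_const, card_range, nsmul_eq_mul]
  have hbracket : (1 - q ^ (1 - N * z)) / (1 - q)
      = hurwitzGeom q (N * z) (-1) - hurwitzGeom q 1 (-1) := by
    rw [hurwitzGeom_neg_one hq, hurwitzGeom_neg_one hq, sub_self, Real.rpow_zero]
    ring
  rw [sum_Icc_div_eq_sum_range (Fq_one hQ.ne'), hsum hz, hsum (by positivity : (0 : ℝ) < 1 / N),
    mul_one_div_cancel (Nat.cast_ne_zero.2 hN), hbracket,
    Fq_eq_rawFq_sub_rawFq_one hq hq1 (by positivity)]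
  ring

end LogGamma

/-- The `q`-analogue of the Gauss–Legendre multiplication formula: for `0 < q < 1`,
an integer `N ≥ 1` and real `z > 0`,
`[N]_q^{[1−Nz]_q} Γ̃_{q^N}(1/N) ⋯ Γ̃_{q^N}((N−1)/N) Γ̃_q(Nz)
  = Γ̃_{q^N}(z) Γ̃_{q^N}(z+1/N) ⋯ Γ̃_{q^N}(z+(N−1)/N)`; equivalently,
`[1−Nz]_q log [N]_q + ∑_{k=1}^{N−1} F_{q^N}(k/N) + F_q(Nz) = ∑_{k=0}^{N−1} F_{q^N}(z+k/N)`. -/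
theorem gauss_legendre_q (q : ℝ) (hq0 : 0 < q) (hq1 : q < 1) (N : ℕ) (hN : 1 ≤ N)
    (z : ℝ) (hz : 0 < z) :
    (((1 - q ^ (N : ℝ)) / (1 - q)) ^ ((1 - q ^ (1 - (N : ℝ) * z)) / (1 - q)) *
        (∏ k ∈ Finset.Icc 1 (N - 1), GammaQ (q ^ (N : ℝ)) ((k : ℝ) / N)) *
        GammaQ q ((N : ℝ) * z)
      = ∏ k ∈ Finset.range N, GammaQ (q ^ (N : ℝ)) (z + (k : ℝ) / N)) ∧
    (((1 - q ^ (1 - (N : ℝ) * z)) / (1 - q)) * Real.log ((1 - q ^ (N : ℝ)) / (1 - q))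
        + (∑ k ∈ Finset.Icc 1 (N - 1), Fq (q ^ (N : ℝ)) ((k : ℝ) / N))
        + Fq q ((N : ℝ) * z)
      = ∑ k ∈ Finset.range N, Fq (q ^ (N : ℝ)) (z + (k : ℝ) / N)) := by
  have hlog := sum_Fq_pow hq0 hq1 (Nat.one_le_iff_ne_zero.1 hN) hz
  have hpos : 0 < (1 - q ^ N) / (1 - q) :=
    div_pos (sub_pos.2 (pow_lt_one₀ hq0.le hq1 (Nat.one_le_iff_ne_zero.1 hN))) (sub_pos.2 hq1)
  rw [Real.rpow_natCast]
  refine ⟨?_, hlog⟩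
  simp only [GammaQ]
  rw [Real.rpow_def_of_pos hpos, mul_comm (Real.log _), ← Real.exp_sum, ← Real.exp_sum,
    ← Real.exp_add, ← Real.exp_add, hlog]
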